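/- arXiv:1506.06523 — 2 statements merged into one kernel-verified Lean document; each statement's English description precedes it below -/
import Mathlib

section
/- Let A be a unital complex C*-algebra, H a unitarizable subgroup of Aˣ, and r, s positive invertible elements of A. For t ∈ [0,1] let γ_t = γ_{r²,s²}(t) = r(r⁻¹ s² r⁻¹)^t r and let H_t = γ_t^{-1/2} H γ_t^{1/2}. Then Sim(H_t) ≤ Sim(r⁻¹ H r)^{1−t} · Sim(s⁻¹ H s)^{t}, where Sim(K) = inf{‖u‖‖u⁻¹‖ : u ∈ Aˣ, u⁻¹ K u consists of unitaries}. -/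
/-- An element of a unital C*-algebra is *positive invertible* if it is self-adjoint
with spectrum contained in `(0, ∞)`. -/
def IsPosInv {A : Type*} [CStarAlgebra A] (a : A) : Prop :=
  IsSelfAdjoint a ∧ spectrum ℝ a ⊆ Set.Ioi (0 : ℝ)

/-- Real powers `a ^ t` defined by the continuous functional calculus. -/
noncomputable def cpow {A : Type*} [CStarAlgebra A] (a : A) (t : ℝ) : A :=
  cfc (fun x : ℝ => x ^ t) a

/-- The logarithm defined by the continuous functional calculus. -/
noncomputable def clog {A : Type*} [CStarAlgebra A] (a : A) : A :=
  cfc Real.log a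

/-- The metric `d(x, y) = ‖log (x^{-1/2} y x^{-1/2})‖` on positive invertible elements. -/
noncomputable def dd {A : Type*} [CStarAlgebra A] (x y : A) : ℝ :=
  ‖clog (cpow x (-(1/2)) * y * cpow x (-(1/2)))‖

/-- The geodesic `γ_{a,b}(t) = a^{1/2} (a^{-1/2} b a^{-1/2})^t a^{1/2}`. -/
noncomputable def geo {A : Type*} [CStarAlgebra A] (a b : A) (t : ℝ) : A :=
  cpow a (1/2) * cpow (cpow a (-(1/2)) * b * cpow a (-(1/2))) t * cpow a (1/2)

/-- The distance from a point to a subset. -/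
noncomputable def distSet {A : Type*} [CStarAlgebra A] (x : A) (C : Set A) : ℝ :=
  sInf {r : ℝ | ∃ c ∈ C, r = dd x c}

/-- The distance between two subsets. -/
noncomputable def distSets {A : Type*} [CStarAlgebra A] (C D : Set A) : ℝ :=
  sInf {r : ℝ | ∃ x ∈ C, ∃ y ∈ D, r = dd x y}

/-- The orbit `O_H(1) = {h h* : h ∈ H}` of the identity under the action `h · a = h a h*`. -/
def orbitOne {A : Type*} [CStarAlgebra A] (H : Subgroup Aˣ) : Set A :=
  {x : A | ∃ h ∈ H, x = (h : A) * star (h : A)}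

/-- The fixed point set `P^H = {a positive invertible : h a h* = a for all h ∈ H}`. -/
def fixedSet {A : Type*} [CStarAlgebra A] (H : Subgroup Aˣ) : Set A :=
  {a : A | IsPosInv a ∧ ∀ h ∈ H, (h : A) * a * star (h : A) = a}

/-- The similarity number `Sim(H) = inf {‖s‖ ‖s⁻¹‖ : s a unitarizer of H}`. -/
noncomputable def simNum {A : Type*} [CStarAlgebra A] (H : Subgroup Aˣ) : ℝ :=
  sInf {c : ℝ | ∃ s : Aˣ, (∀ h ∈ H, (↑s⁻¹ : A) * (h : A) * (s : A) ∈ unitary A) ∧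
    c = ‖(s : A)‖ * ‖(↑s⁻¹ : A)‖}

/-- The set of norms of elements of `H`; its supremum is the size `|H|`. -/
def normSet {A : Type*} [CStarAlgebra A] (H : Subgroup Aˣ) : Set ℝ :=
  {r : ℝ | ∃ h ∈ H, r = ‖(h : A)‖}

/-- The orbit diameter function `D_H(a) = sup_{h ∈ H} d(a, h a h*)`. -/
noncomputable def orbDiam {A : Type*} [CStarAlgebra A] (H : Subgroup Aˣ) (a : A) : ℝ :=
  sSup {r : ℝ | ∃ h ∈ H, r = dd a ((h : A) * a * star (h : A))}

/-- The size `|p H q| = sup_{h ∈ H} ‖p h q‖` of the conjugated family `p H q`. -/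
noncomputable def sizeConj {A : Type*} [CStarAlgebra A] (H : Subgroup Aˣ) (p q : A) : ℝ :=
  sSup {c : ℝ | ∃ h ∈ H, c = ‖p * (h : A) * q‖}

/-- The similarity number `Sim(p H q)` of the conjugated family `p H q`. -/
noncomputable def simConj {A : Type*} [CStarAlgebra A] (H : Subgroup Aˣ) (p q : A) : ℝ :=
  sInf {c : ℝ | ∃ u : Aˣ, (∀ h ∈ H, (↑u⁻¹ : A) * (p * (h : A) * q) * (u : A) ∈ unitary A) ∧
    c = ‖(u : A)‖ * ‖(↑u⁻¹ : A)‖}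

/-- The geodesic `γ_{r², s²}(t) = r (r⁻¹ s² r⁻¹)^t r` for positive invertible `r`, `s`. -/
noncomputable def gammaRS {A : Type*} [CStarAlgebra A] (r s : Aˣ) (t : ℝ) : A :=
  (r : A) * cpow ((↑r⁻¹ : A) * ((s : A) * (s : A)) * (↑r⁻¹ : A)) t * (r : A)

/-!
A unit `v` unitarizes `H` exactly when `v v*` is fixed by the action `h · a = h a h*`. The geodesics
`geo a b` are equivariant for this action, so a geodesic joining two fixed points consists of fixed
points: if `x` and `w` unitarize `H` and `v v* = geo (x x*) (w w*) t`, then so does `v`.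

The map `(a, b) ↦ geo a b t` is monotone and homogeneous of degrees `1 - t` and `t`: in `b` by
operator monotonicity of `x ↦ x ^ t`, in `a` by the symmetry `geo a b t = geo b a (1 - t)`. Since
`‖g⁻¹ v‖² ≤ c` means `v v* ≤ c g g*`, the condition number of `g⁻¹ v` is log-convex along pairs of
geodesics `g g*`, `v v*`. For fixed `g`, the infimum of these condition numbers over the unitarizers
`v` of `H` is `Sim(g⁻¹ H g)`.
-/

section UnitaryConjugation

/-- The unitarizers of `H`: the units `v` for which `v⁻¹ H v` consists of unitaries. -/
def unitarizers {R : Type*} [Monoid R] [StarMul R] (H : Subgroup Rˣ) : Set Rˣ :=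
  {v | ∀ h ∈ H, (↑v⁻¹ : R) * (h : R) * (v : R) ∈ unitary R}

theorem mem_unitarizers_iff_conj_eq {R : Type*} [Monoid R] [StarMul R] {H : Subgroup Rˣ}
    {v : Rˣ} :
    v ∈ unitarizers H ↔
      ∀ h ∈ H, (h : R) * ((v : R) * star (v : R)) * star (h : R) = (v : R) * star (v : R) := by
  refine forall₂_congr fun h _ ↦ ?_
  have key := Units.inv_mul_mem_unitary v (h * v)
  rw [Units.val_mul, ← mul_assoc] at key
  rw [key, eq_comm, Units.ext_iff]
  simp only [Units.val_mul, Units.coe_star, star_mul, mul_assoc]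

theorem cfc_unitary_conj {A : Type*} [CStarAlgebra A] (U : unitary A) {x : A}
    (hx : IsSelfAdjoint x) {f : ℝ → ℝ} (hf : ContinuousOn f (spectrum ℝ x)) :
    cfc f ((U : A) * x * star (U : A)) = (U : A) * cfc f x * star (U : A) := by
  have hcont : Continuous (Unitary.conjStarAlgAut ℝ A U) := by
    change Continuous fun y : A ↦ (U : A) * y * star (U : A)
    fun_prop
  simpa only [Unitary.conjStarAlgAut_apply] using
    (StarAlgHomClass.map_cfc (R := ℝ) (S := ℝ) (Unitary.conjStarAlgAut ℝ A U) f x hf hcont hx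
      (hx.conjugate (U : A))).symm

end UnitaryConjugation

section Order

variable {A : Type*} [CStarAlgebra A] [PartialOrder A] [StarOrderedRing A]

theorem cpow_eq_rpow {a : A} (ha : 0 ≤ a) (t : ℝ) : cpow a t = a ^ t :=
  (CFC.rpow_eq_cfc_real ha).symm

theorem cpow_unitary_conj (U : unitary A) {x : A} (hx : IsStrictlyPositive x) (t : ℝ) :
    cpow ((U : A) * x * star (U : A)) t = (U : A) * cpow x t * star (U : A) :=
  cfc_unitary_conj U hx.isSelfAdjoint <|
    continuousOn_id.rpow_const fun _ hy ↦
      .inl (ne_of_mem_of_not_mem hy (spectrum.zero_notMem ℝ hx.isUnit))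

theorem smul_rpow_of_nonneg {c : ℝ} (hc : 0 ≤ c) {x : A} (hx : 0 ≤ x) {t : ℝ} (ht : 0 ≤ t) :
    (c • x) ^ t = (c ^ t) • x ^ t := by
  have hcont : Continuous fun y : ℝ ↦ y ^ t := Real.continuous_rpow_const ht
  rw [CFC.rpow_eq_cfc_real (smul_nonneg hc hx), CFC.rpow_eq_cfc_real hx,
    ← cfc_comp_smul c _ x hcont.continuousOn (.of_nonneg hx),
    ← cfc_smul _ _ _ hcont.continuousOn]
  exact cfc_congr fun y hy ↦ by
    simp only [smul_eq_mul, Real.mul_rpow hc (spectrum_nonneg_of_nonneg hx hy)]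

theorem isStrictlyPositive_unit_mul_star (g : Aˣ) :
    IsStrictlyPositive ((g : A) * star (g : A)) :=
  (g * star g).isUnit.isStrictlyPositive (mul_star_self_nonneg _)

theorem exists_unit_cpow_half {a : A} (ha : IsStrictlyPositive a) :
    ∃ k : Aˣ, (k : A) = cpow a (1 / 2) ∧ (↑k⁻¹ : A) = cpow a (-(1 / 2)) ∧
      IsSelfAdjoint (k : A) ∧ (k : A) * star (k : A) = a := by
  have hsa : IsSelfAdjoint (a ^ (1 / 2 : ℝ)) := .of_nonneg CFC.rpow_nonneg
  refine ⟨ha.isUnit.unit.cfcRpow (1 / 2) ha.nonneg, (cpow_eq_rpow ha.nonneg _).symm,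
    (cpow_eq_rpow ha.nonneg _).symm, hsa, ?_⟩
  change a ^ (1 / 2 : ℝ) * star (a ^ (1 / 2 : ℝ)) = a
  rw [hsa.star_eq, ← CFC.rpow_add ha.isUnit, add_halves, CFC.rpow_one a ha.nonneg]

theorem exists_unit_congruence {a b : A} (ha : IsStrictlyPositive a)
    (hb : IsStrictlyPositive b) :
    ∃ (g : Aˣ) (y : A), IsStrictlyPositive y ∧
      (g : A) * star (g : A) = a ∧ (g : A) * y * star (g : A) = b := by
  obtain ⟨g, -, -, -, hga⟩ := exists_unit_cpow_half ha
  have hgb : (g : A) * ((↑g⁻¹ : A) * b * star (↑g⁻¹ : A)) * star (g : A) = b := by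
    have h_star : star (↑g⁻¹ : A) * star (g : A) = 1 := by
      rw [← star_mul, Units.mul_inv, star_one]
    simp only [mul_assoc, h_star, Units.mul_inv_cancel_left, mul_one]
  exact ⟨g, _, g⁻¹.isUnit.isStrictlyPositive_star_right_conjugate_iff.2 hb, hga, hgb⟩

theorem geo_eq_rpow {a b : A} (ha : 0 ≤ a) (hb : 0 ≤ b) (t : ℝ) :
    geo a b t = a ^ (1 / 2 : ℝ) * (a ^ (-(1 / 2) : ℝ) * b * a ^ (-(1 / 2) : ℝ)) ^ t *
      a ^ (1 / 2 : ℝ) := by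
  simp only [geo, cpow_eq_rpow ha]
  rw [cpow_eq_rpow (conjugate_nonneg_of_nonneg hb CFC.rpow_nonneg)]

-- `g` differs from the positive square root of `g g*` by a unitary, which passes through powers.
theorem geo_mul_star_conj (g : Aˣ) {y : A} (hy : IsStrictlyPositive y) (t : ℝ) :
    geo ((g : A) * star (g : A)) ((g : A) * y * star (g : A)) t =
      (g : A) * y ^ t * star (g : A) := by
  obtain ⟨k, hk, hk_inv, hk_sa, hkk⟩ := exists_unit_cpow_half (isStrictlyPositive_unit_mul_star g)
  have hU : (↑k⁻¹ : A) * g ∈ unitary A :=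
    (Units.inv_mul_mem_unitary k g).2 (Units.ext hkk)
  have hU_star : star ((↑k⁻¹ : A) * g) = star (g : A) * ↑k⁻¹ := by
    rw [star_mul, ← Units.coe_star_inv, Units.ext (show (↑(star k) : A) = k from hk_sa)]
  have hconj := cpow_unitary_conj ⟨_, hU⟩ hy t
  simp only [hU_star, cpow_eq_rpow hy.nonneg] at hconj
  calc geo ((g : A) * star (g : A)) ((g : A) * y * star (g : A)) t
      = k * cpow (↑k⁻¹ * g * y * (star (g : A) * ↑k⁻¹)) t * k := by
        simp only [geo, ← hk, ← hk_inv, mul_assoc]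
    _ = k * (↑k⁻¹ * g * y ^ t * (star (g : A) * ↑k⁻¹)) * k := by rw [hconj]
    _ = g * y ^ t * star (g : A) := by
        simp only [mul_assoc, Units.mul_inv_cancel_left, Units.inv_mul, mul_one]

theorem isStrictlyPositive_geo {a b : A} (ha : IsStrictlyPositive a)
    (hb : IsStrictlyPositive b) (t : ℝ) : IsStrictlyPositive (geo a b t) := by
  obtain ⟨g, y, hy, rfl, rfl⟩ := exists_unit_congruence ha hb
  rw [geo_mul_star_conj g hy, g.isUnit.isStrictlyPositive_star_right_conjugate_iff]
  exact hy.rpow y t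

theorem geo_conj (h : Aˣ) {a b : A} (ha : IsStrictlyPositive a) (hb : IsStrictlyPositive b)
    (t : ℝ) :
    geo ((h : A) * a * star (h : A)) ((h : A) * b * star (h : A)) t =
      (h : A) * geo a b t * star (h : A) := by
  obtain ⟨g, y, hy, rfl, rfl⟩ := exists_unit_congruence ha hb
  have hhg := geo_mul_star_conj (h * g) hy t
  simp only [Units.val_mul, star_mul, mul_assoc] at hhg
  rw [geo_mul_star_conj g hy]
  simp only [mul_assoc, hhg]

theorem geo_comm {a b : A} (ha : IsStrictlyPositive a) (hb : IsStrictlyPositive b) (t : ℝ) :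
    geo a b t = geo b a (1 - t) := by
  obtain ⟨g, y, hy, rfl, rfl⟩ := exists_unit_congruence ha hb
  have h_one : geo y 1 (1 - t) = y ^ t := by
    rw [geo_eq_rpow hy.nonneg zero_le_one, mul_one, ← CFC.rpow_add hy.isUnit,
      CFC.rpow_rpow y _ _ (by norm_num) hy, ← CFC.rpow_add hy.isUnit, ← CFC.rpow_add hy.isUnit]
    ring_nf
  have h_conj := geo_conj g hy isStrictlyPositive_one (1 - t)
  rw [mul_one] at h_conj
  rw [geo_mul_star_conj g hy, h_conj, h_one]

theorem geo_le_geo_right {a b b' : A} (ha : 0 ≤ a) (hb : 0 ≤ b) (hbb' : b ≤ b') {t : ℝ}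
    (ht : t ∈ Set.Icc (0 : ℝ) 1) : geo a b t ≤ geo a b' t := by
  rw [geo_eq_rpow ha hb, geo_eq_rpow ha (hb.trans hbb')]
  exact conjugate_le_conjugate_of_nonneg
    (CFC.rpow_le_rpow ht (conjugate_le_conjugate_of_nonneg hbb' CFC.rpow_nonneg)) CFC.rpow_nonneg

theorem geo_smul_right {a b : A} (ha : 0 ≤ a) (hb : 0 ≤ b) {c t : ℝ} (hc : 0 ≤ c)
    (ht : 0 ≤ t) : geo a (c • b) t = c ^ t • geo a b t := by
  rw [geo_eq_rpow ha (smul_nonneg hc hb), geo_eq_rpow ha hb, mul_smul_comm, smul_mul_assoc,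
    smul_rpow_of_nonneg hc (conjugate_nonneg_of_nonneg hb CFC.rpow_nonneg) ht, mul_smul_comm,
    smul_mul_assoc]

theorem geo_le_smul_geo {a b a' b' : A} (ha : IsStrictlyPositive a) (hb : IsStrictlyPositive b)
    (ha' : IsStrictlyPositive a') (hb' : IsStrictlyPositive b') {c d : ℝ} (hc : 0 ≤ c)
    (hd : 0 ≤ d) (haa' : a ≤ c • a') (hbb' : b ≤ d • b') {t : ℝ}
    (ht : t ∈ Set.Icc (0 : ℝ) 1) :
    geo a b t ≤ (c ^ (1 - t) * d ^ t) • geo a' b' t := by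
  have ht' : 1 - t ∈ Set.Icc (0 : ℝ) 1 := Set.Icc.mem_iff_one_sub_mem.1 ht
  calc geo a b t
      ≤ geo a (d • b') t := geo_le_geo_right ha.nonneg hb.nonneg hbb' ht
    _ = d ^ t • geo b' a (1 - t) := by
        rw [geo_smul_right ha.nonneg hb'.nonneg hd ht.1, geo_comm ha hb']
    _ ≤ d ^ t • geo b' (c • a') (1 - t) :=
        smul_le_smul_of_nonneg_left (geo_le_geo_right hb'.nonneg ha.nonneg haa' ht')
          (Real.rpow_nonneg hd t)
    _ = (c ^ (1 - t) * d ^ t) • geo a' b' t := by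
        rw [geo_smul_right hb'.nonneg ha'.nonneg hc ht'.1, ← geo_comm ha' hb', smul_smul,
          mul_comm]

theorem norm_inv_mul_sq_le_iff (g : Aˣ) (v : A) {c : ℝ} (hc : 0 ≤ c) :
    ‖(↑g⁻¹ : A) * v‖ ^ 2 ≤ c ↔ v * star v ≤ c • ((g : A) * star (g : A)) := by
  obtain ⟨w, rfl⟩ : ∃ w, v = g * w := ⟨↑g⁻¹ * v, (g.mul_inv_cancel_left v).symm⟩
  have h_diff : c • ((g : A) * star (g : A)) - g * w * star (g * w) =
      g * (c • 1 - w * star w) * star (g : A) := by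
    simp only [star_mul, mul_sub, sub_mul, mul_smul_comm, smul_mul_assoc, mul_one, mul_assoc]
  rw [Units.inv_mul_cancel_left, sq, ← CStarRing.norm_self_mul_star,
    CStarAlgebra.norm_le_iff_le_algebraMap _ hc (mul_star_self_nonneg _),
    Algebra.algebraMap_eq_smul_one, ← sub_nonneg, ← sub_nonneg (b := _ * star _), h_diff,
    g.isUnit.star_right_conjugate_nonneg_iff]

end Order

section Interpolation

/-- The condition number of `g⁻¹ v`: as `v` runs through the unitarizers of `H`, the elements
`g⁻¹ v` are the unitarizers of `g⁻¹ H g`. -/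
noncomputable def distortion {R : Type*} [NormedRing R] (g v : Rˣ) : ℝ :=
  ‖(↑g⁻¹ : R) * v‖ * ‖(↑v⁻¹ : R) * g‖

theorem distortion_nonneg {R : Type*} [NormedRing R] (g v : Rˣ) : 0 ≤ distortion g v :=
  mul_nonneg (norm_nonneg _) (norm_nonneg _)

theorem le_sInf_rpow_mul_sInf_rpow {S T : Set ℝ} (hS : S.Nonempty) (hT : T.Nonempty)
    (hS_bdd : BddBelow S) (hT_bdd : BddBelow T) {p q : ℝ} (hp : 0 ≤ p) (hq : 0 ≤ q) {m : ℝ}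
    (hm : ∀ a ∈ S, ∀ b ∈ T, m ≤ a ^ p * b ^ q) : m ≤ sInf S ^ p * sInf T ^ q := by
  have h_cont : Continuous (Function.uncurry fun a b : ℝ ↦ a ^ p * b ^ q) :=
    ((Real.continuous_rpow_const hp).comp continuous_fst).mul
      ((Real.continuous_rpow_const hq).comp continuous_snd)
  have h_mem := map_mem_closure₂ (u := Set.Ici m) h_cont (csInf_mem_closure hS hS_bdd)
    (csInf_mem_closure hT hT_bdd) hm
  rwa [isClosed_Ici.closure_eq] at h_mem

attribute [local instance] CStarAlgebra.spectralOrder CStarAlgebra.spectralOrderedRing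

variable {A : Type*} [CStarAlgebra A]

theorem simConj_inv_eq_sInf_distortion (H : Subgroup Aˣ) (g : Aˣ) :
    simConj H (↑g⁻¹ : A) (g : A) = sInf (distortion g '' unitarizers H) := by
  have h_conj (u : Aˣ) (h : A) :
      (↑(g * u)⁻¹ : A) * h * ↑(g * u) = ↑u⁻¹ * (↑g⁻¹ * h * g) * u := by
    simp only [mul_inv_rev, Units.val_mul, mul_assoc]
  have h_dist (u : Aˣ) : distortion g (g * u) = ‖(u : A)‖ * ‖(↑u⁻¹ : A)‖ := by
    simp only [distortion, mul_inv_rev, Units.val_mul, Units.inv_mul_cancel_left,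
      Units.inv_mul_cancel_right]
  refine congrArg sInf (Set.ext fun c ↦ (Equiv.mulLeft g).exists_congr fun u ↦ ?_)
  simp only [Equiv.coe_mulLeft, unitarizers, Set.mem_ofPred_eq, h_conj, h_dist, eq_comm]

theorem mem_unitarizers_of_mul_star_eq_geo {H : Subgroup Aˣ} {x w v : Aˣ} (hx : x ∈ unitarizers H)
    (hw : w ∈ unitarizers H) {t : ℝ}
    (hv : (v : A) * star (v : A) = geo ((x : A) * star (x : A)) ((w : A) * star (w : A)) t) :
    v ∈ unitarizers H := by
  rw [mem_unitarizers_iff_conj_eq] at hx hw ⊢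
  intro h hh
  rw [hv, ← geo_conj h (isStrictlyPositive_unit_mul_star x) (isStrictlyPositive_unit_mul_star w),
    hx h hh, hw h hh]

theorem norm_inv_mul_le_of_mul_star_eq_geo {r s q x w v : Aˣ} {t : ℝ}
    (ht : t ∈ Set.Icc (0 : ℝ) 1)
    (hq : (q : A) * star (q : A) = geo ((r : A) * star (r : A)) ((s : A) * star (s : A)) t)
    (hv : (v : A) * star (v : A) = geo ((x : A) * star (x : A)) ((w : A) * star (w : A)) t) :
    ‖(↑q⁻¹ : A) * v‖ ≤ ‖(↑r⁻¹ : A) * x‖ ^ (1 - t) * ‖(↑s⁻¹ : A) * w‖ ^ t := by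
  set c := ‖(↑r⁻¹ : A) * x‖
  set d := ‖(↑s⁻¹ : A) * w‖
  have h_sq : (c ^ 2) ^ (1 - t) * (d ^ 2) ^ t = (c ^ (1 - t) * d ^ t) ^ 2 := by
    rw [mul_pow, Real.rpow_pow_comm (norm_nonneg _), Real.rpow_pow_comm (norm_nonneg _)]
  have h_geo : (v : A) * star (v : A) ≤ (c ^ (1 - t) * d ^ t) ^ 2 • ((q : A) * star (q : A)) := by
    rw [hv, hq, ← h_sq]
    exact geo_le_smul_geo (isStrictlyPositive_unit_mul_star x)
      (isStrictlyPositive_unit_mul_star w) (isStrictlyPositive_unit_mul_star r)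
      (isStrictlyPositive_unit_mul_star s) (sq_nonneg c) (sq_nonneg d)
      ((norm_inv_mul_sq_le_iff r _ (sq_nonneg c)).1 le_rfl)
      ((norm_inv_mul_sq_le_iff s _ (sq_nonneg d)).1 le_rfl) ht
  exact le_of_sq_le_sq ((norm_inv_mul_sq_le_iff q _ (sq_nonneg _)).2 h_geo) (by positivity)

theorem distortion_le_of_mul_star_eq_geo {r s q x w v : Aˣ} {t : ℝ}
    (ht : t ∈ Set.Icc (0 : ℝ) 1)
    (hq : (q : A) * star (q : A) = geo ((r : A) * star (r : A)) ((s : A) * star (s : A)) t)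
    (hv : (v : A) * star (v : A) = geo ((x : A) * star (x : A)) ((w : A) * star (w : A)) t) :
    distortion q v ≤ distortion r x ^ (1 - t) * distortion s w ^ t := by
  simp only [distortion, Real.mul_rpow (norm_nonneg _) (norm_nonneg _)]
  rw [mul_mul_mul_comm]
  gcongr
  · exact norm_inv_mul_le_of_mul_star_eq_geo ht hq hv
  · exact norm_inv_mul_le_of_mul_star_eq_geo ht hv hq

theorem exists_unit_mul_star_eq_geo (x w : Aˣ) (t : ℝ) :
    ∃ v : Aˣ, (v : A) * star (v : A) = geo ((x : A) * star (x : A)) ((w : A) * star (w : A)) t :=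
  have ⟨v, _, _, _, hv⟩ := exists_unit_cpow_half <| isStrictlyPositive_geo
    (isStrictlyPositive_unit_mul_star x) (isStrictlyPositive_unit_mul_star w) t
  ⟨v, hv⟩

theorem simConj_le_of_mul_star_eq_geo {H : Subgroup Aˣ} (hH : (unitarizers H).Nonempty)
    {r s q : Aˣ} {t : ℝ} (ht : t ∈ Set.Icc (0 : ℝ) 1)
    (hq : (q : A) * star (q : A) = geo ((r : A) * star (r : A)) ((s : A) * star (s : A)) t) :
    simConj H (↑q⁻¹ : A) (q : A) ≤
      simConj H (↑r⁻¹ : A) (r : A) ^ (1 - t) * simConj H (↑s⁻¹ : A) (s : A) ^ t := by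
  have h_bdd (g : Aˣ) : BddBelow (distortion g '' unitarizers H) :=
    ⟨0, Set.forall_mem_image.2 fun v _ ↦ distortion_nonneg g v⟩
  simp only [simConj_inv_eq_sInf_distortion]
  refine le_sInf_rpow_mul_sInf_rpow (hH.image _) (hH.image _) (h_bdd r) (h_bdd s)
    (sub_nonneg.2 ht.2) ht.1 ?_
  rintro _ ⟨x, hx, rfl⟩ _ ⟨w, hw, rfl⟩
  obtain ⟨v, hv⟩ := exists_unit_mul_star_eq_geo x w t
  exact (csInf_le (h_bdd q) ⟨v, mem_unitarizers_of_mul_star_eq_geo hx hw hv, rfl⟩).trans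
    (distortion_le_of_mul_star_eq_geo ht hq hv)

theorem gammaRS_eq_geo {r s : Aˣ} (hr : IsSelfAdjoint (r : A)) (hs : IsSelfAdjoint (s : A))
    (t : ℝ) :
    gammaRS r s t = geo ((r : A) * star (r : A)) ((s : A) * star (s : A)) t := by
  have hr_inv : star (↑r⁻¹ : A) = ↑r⁻¹ := by
    rw [← Units.coe_star_inv, Units.ext (show (↑(star r) : A) = r from hr)]
  have hy : IsStrictlyPositive ((↑r⁻¹ : A) * (s * s) * ↑r⁻¹) := by
    simpa only [Units.val_mul, star_mul, hr_inv, hs.star_eq, mul_assoc] using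
      isStrictlyPositive_unit_mul_star (r⁻¹ * s)
  have h_geo := geo_mul_star_conj r hy t
  simp only [hr.star_eq, hs.star_eq, ← cpow_eq_rpow hy.nonneg] at h_geo ⊢
  rw [gammaRS, ← h_geo]
  simp only [mul_assoc, Units.mul_inv_cancel_left, Units.inv_mul, mul_one]

end Interpolation

theorem stmt13_general {A : Type*} [CStarAlgebra A] (H : Subgroup Aˣ)
    (hH : ∃ u : Aˣ, ∀ h ∈ H, (↑u⁻¹ : A) * (h : A) * (u : A) ∈ unitary A)
    (r s : Aˣ) (hr : IsSelfAdjoint (r : A)) (hs : IsSelfAdjoint (s : A))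
    (t : ℝ) (ht : t ∈ Set.Icc (0 : ℝ) 1) :
    simConj H (cpow (gammaRS r s t) (-(1/2))) (cpow (gammaRS r s t) (1/2)) ≤
      simConj H (↑r⁻¹ : A) (r : A) ^ (1 - t) * simConj H (↑s⁻¹ : A) (s : A) ^ t := by
  let _ : PartialOrder A := CStarAlgebra.spectralOrder A
  have _ : StarOrderedRing A := CStarAlgebra.spectralOrderedRing A
  obtain ⟨q, hq, hq_inv, -, hqq⟩ := exists_unit_cpow_half <| isStrictlyPositive_geo
    (isStrictlyPositive_unit_mul_star r) (isStrictlyPositive_unit_mul_star s) t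
  rw [gammaRS_eq_geo hr hs, ← hq, ← hq_inv]
  exact simConj_le_of_mul_star_eq_geo hH ht hqq

/-- Geometric interpolation for the similarity number:
`Sim(H_t) ≤ Sim(r⁻¹ H r)^{1-t} Sim(s⁻¹ H s)^t`, where
`H_t = γ_t^{-1/2} H γ_t^{1/2}` along the geodesic `γ_t = γ_{r², s²}(t)`. -/
theorem stmt13 {A : Type*} [CStarAlgebra A] (H : Subgroup Aˣ)
    (hH : ∃ u : Aˣ, ∀ h ∈ H, (↑u⁻¹ : A) * (h : A) * (u : A) ∈ unitary A)
    (r s : Aˣ) (hr : IsPosInv (r : A)) (hs : IsPosInv (s : A))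
    (t : ℝ) (ht : t ∈ Set.Icc (0 : ℝ) 1) :
    simConj H (cpow (gammaRS r s t) (-(1/2))) (cpow (gammaRS r s t) (1/2)) ≤
      simConj H (↑r⁻¹ : A) (r : A) ^ (1 - t) * simConj H (↑s⁻¹ : A) (s : A) ^ t :=
  stmt13_general H hH r s hr.1 hs.1 t ht
end

section
/- Let ℋ be a separable complex Hilbert space with Hilbert basis (e_i)_{i∈I}, and let H be a subgroup of the invertible bounded operators on ℋ such that every h ∈ H has the form h = λ·1 + k with λ ∈ ℂ and k Hilbert–Schmidt (∑'_i ‖k e_i‖² < ∞). Suppose there is a constant C < ∞ such that for every h ∈ H, ∑'_i ‖(h h* − 1) e_i‖² ≤ C² (i.e. the Hilbert–Schmidt norms ‖h h* − 1‖₂ are uniformly bounded by C). Then H is unitarizable: there exists an invertible s ∈ B(ℋ) such that s⁻¹ h s is unitary for every h ∈ H. -/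
/-!
Let `H` act on operators by `g • p = g p g*`. A fixed point `p` of this action which is strictly
positive gives `s = √p` with `s⁻¹ h s` unitary for every `h ∈ H`. Such a `p` is a center of the
orbit `{h h*}` of `1`: although the action is not isometric for the Hilbert–Schmidt norm, the
functional `p ↦ sup_{g, h} ‖g p g* - h h*‖₂²` is invariant, and the parallelogram law together with
the uniform bound on `H` makes it uniformly convex for the operator norm. Hence it has a unique
minimizer on the closed convex invariant set of all `p` whose orbit is bounded below by a fixed
positive multiple of `1`, and uniqueness makes this minimizer a fixed point.
-/

open scoped ENNReal NNReal InnerProductSpace Topology Filter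

section MidpointStrongConvex

variable {X Y : Type*} [NormedAddCommGroup X] [NormedSpace ℝ X]
  [NormedAddCommGroup Y] [NormedSpace ℝ Y]

/-- Strong convexity at midpoints, with modulus `c`, of an extended-valued functional. Taking values
in `ℝ≥0∞` allows functionals that are finite only on a subspace, such as the square of the
Hilbert–Schmidt norm on bounded operators. -/
def MidpointStrongConvex (c : ℝ≥0∞) (Φ : X → ℝ≥0∞) : Prop :=
  ∀ p q, 2 * (Φ (midpoint ℝ p q) + c * edist p q ^ 2) ≤ Φ p + Φ q

namespace MidpointStrongConvex

variable {c : ℝ≥0∞}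

theorem iSup {ι : Type*} [Nonempty ι] {Φ : ι → X → ℝ≥0∞}
    (hΦ : ∀ i, MidpointStrongConvex c (Φ i)) : MidpointStrongConvex c fun p => ⨆ i, Φ i p := by
  intro p q
  rw [ENNReal.iSup_add, ENNReal.mul_iSup]
  exact iSup_le fun i => (hΦ i p q).trans
    (add_le_add (le_iSup (fun i => Φ i p) i) (le_iSup (fun i => Φ i q) i))

theorem comp_affineMap {N : Y → ℝ≥0∞} (hN : MidpointStrongConvex c N) {K : ℝ≥0} {f : X →ᵃ[ℝ] Y}
    (hf : AntilipschitzWith K f) :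
    MidpointStrongConvex (c * (K : ℝ≥0∞)⁻¹ ^ 2) fun p => N (f p) := by
  intro p q
  calc 2 * (N (f (midpoint ℝ p q)) + c * (K : ℝ≥0∞)⁻¹ ^ 2 * edist p q ^ 2)
      = 2 * (N (midpoint ℝ (f p) (f q)) + c * ((K : ℝ≥0∞)⁻¹ * edist p q) ^ 2) := by
        rw [f.map_midpoint, mul_pow, mul_assoc]
    _ ≤ 2 * (N (midpoint ℝ (f p) (f q)) + c * edist (f p) (f q) ^ 2) := by
        gcongr
        exact hf.mul_le_edist p q
    _ ≤ N (f p) + N (f q) := hN (f p) (f q)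

variable {Φ : X → ℝ≥0∞} {S : Set X}

theorem two_mul_iInf_add_le (hΦ : MidpointStrongConvex c Φ) (hS : Convex ℝ S) {p q : X}
    (hp : p ∈ S) (hq : q ∈ S) : 2 * ((⨅ x ∈ S, Φ x) + c * edist p q ^ 2) ≤ Φ p + Φ q := by
  refine le_trans ?_ (hΦ p q)
  gcongr
  exact iInf₂_le _ (hS.midpoint_mem hp hq)

theorem cauchy_comap_nhds_iInf (hΦ : MidpointStrongConvex c Φ) (hc : c ≠ 0) (hS : Convex ℝ S)
    (hfin : ∃ p ∈ S, Φ p ≠ ⊤) :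
    Cauchy ((𝓝 (⨅ x ∈ S, Φ x)).comap Φ ⊓ 𝓟 S) := by
  set m := ⨅ x ∈ S, Φ x with hm
  obtain ⟨p₀, hp₀, hp₀_fin⟩ := hfin
  have hm_fin : m ≠ ⊤ := ne_top_of_le_ne_top hp₀_fin (iInf₂_le p₀ hp₀)
  have hm_closure : m ∈ closure (Φ '' S) := by
    rw [hm, ← sInf_image]
    exact csInf_mem_closure ⟨_, p₀, hp₀, rfl⟩ (OrderBot.bddBelow _)
  refine EMetric.cauchy_iff.2 ⟨?_, fun ε hε => ?_⟩
  · rw [← Filter.neBot_iff, ← Filter.map_neBot_iff Φ, Filter.push_pull', Filter.map_principal]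
    exact mem_closure_iff_clusterPt.1 hm_closure
  · have hlt : m < m + c * ε ^ 2 :=
      ENNReal.lt_add_right hm_fin (mul_ne_zero hc (pow_ne_zero 2 hε.ne'))
    refine ⟨Φ ⁻¹' Set.Iio (m + c * ε ^ 2) ∩ S, Filter.inter_mem_inf
      (Filter.preimage_mem_comap (Iio_mem_nhds hlt)) (Filter.mem_principal_self S), ?_⟩
    rintro x ⟨hx, hxS⟩ y ⟨hy, hyS⟩
    by_contra! hxy
    refine (hΦ.two_mul_iInf_add_le hS hxS hyS).not_gt ?_
    calc Φ x + Φ y < (m + c * ε ^ 2) + (m + c * ε ^ 2) := ENNReal.add_lt_add hx hy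
      _ = 2 * (m + c * ε ^ 2) := (two_mul _).symm
      _ ≤ 2 * (m + c * edist x y ^ 2) := by gcongr

theorem exists_eq_iInf [CompleteSpace X] (hΦ : MidpointStrongConvex c Φ) (hc : c ≠ 0)
    (hΦ_lsc : LowerSemicontinuous Φ) (hS : Convex ℝ S) (hS_closed : IsClosed S)
    (hfin : ∃ p ∈ S, Φ p ≠ ⊤) : ∃ p ∈ S, Φ p = ⨅ x ∈ S, Φ x := by
  have hF := hΦ.cauchy_comap_nhds_iInf hc hS hfin
  obtain ⟨p, hp⟩ := CompleteSpace.complete hF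
  have := hF.1
  have hpS : p ∈ S := hS_closed.mem_of_tendsto (Filter.tendsto_id'.2 hp)
    (Filter.mem_inf_of_right (Filter.mem_principal_self S))
  refine ⟨p, hpS, le_antisymm ?_ (iInf₂_le p hpS)⟩
  by_contra! hlt
  obtain ⟨y, hmy, hyp⟩ := exists_between hlt
  have hlow : ∀ᶠ x in (𝓝 (⨅ x ∈ S, Φ x)).comap Φ ⊓ 𝓟 S, y < Φ x := hp (hΦ_lsc p y hyp)
  have hupp : ∀ᶠ x in (𝓝 (⨅ x ∈ S, Φ x)).comap Φ ⊓ 𝓟 S, Φ x < y :=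
    Filter.mem_inf_of_left (Filter.preimage_mem_comap (Iio_mem_nhds hmy))
  obtain ⟨x, hyx, hxy⟩ := (hlow.and hupp).exists
  exact hyx.not_gt hxy

theorem eq_of_le_iInf (hΦ : MidpointStrongConvex c Φ) (hc : c ≠ 0) (hS : Convex ℝ S)
    (hfin : (⨅ x ∈ S, Φ x) ≠ ⊤) {p q : X} (hp : p ∈ S) (hq : q ∈ S)
    (hp_min : Φ p ≤ ⨅ x ∈ S, Φ x) (hq_min : Φ q ≤ ⨅ x ∈ S, Φ x) : p = q := by
  set m := ⨅ x ∈ S, Φ x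
  have h : 2 * (m + c * edist p q ^ 2) ≤ 2 * (m + 0) := by
    rw [add_zero, two_mul m]
    exact (hΦ.two_mul_iInf_add_le hS hp hq).trans (add_le_add hp_min hq_min)
  rw [ENNReal.mul_le_mul_iff_right two_ne_zero ENNReal.ofNat_ne_top,
    ENNReal.add_le_add_iff_left hfin, nonpos_iff_eq_zero] at h
  simpa [hc] using h

end MidpointStrongConvex

section FixedPoint

variable {G : Type*} [Group G] (ρ : G →* (X →L[ℝ] X))

theorem antilipschitzWith_of_norm_inv_le {K : ℝ≥0} {g : G} (hg : ‖ρ g⁻¹‖₊ ≤ K) :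
    AntilipschitzWith K (ρ g) := by
  refine (ρ g).antilipschitz_of_bound fun p => ?_
  calc ‖p‖ = ‖ρ g⁻¹ (ρ g p)‖ := by
        rw [← mul_apply_eq_comp, ← map_mul, inv_mul_cancel, map_one, one_apply_eq_self]
    _ ≤ K * ‖ρ g p‖ := (ρ g⁻¹).le_of_opNorm_le hg _

/-- The largest `N`-distance from a point of the `ρ`-orbit of `p` to a point of the `ρ`-orbit of
`x₀`. Its minimizers play the role of circumcenters of the orbit of `x₀`. -/
noncomputable def orbitRadius (N : X → ℝ≥0∞) (x₀ p : X) : ℝ≥0∞ :=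
  ⨆ g : G × G, N (ρ g.1 p - ρ g.2 x₀)

theorem orbitRadius_apply_le (N : X → ℝ≥0∞) (x₀ p : X) (g : G) :
    orbitRadius ρ N x₀ (ρ g p) ≤ orbitRadius ρ N x₀ p := by
  refine iSup_le fun k => ?_
  simpa [orbitRadius] using le_iSup (fun k : G × G => N (ρ k.1 p - ρ k.2 x₀)) (k.1 * g, k.2)

variable {N : X → ℝ≥0∞}

theorem lowerSemicontinuous_orbitRadius (hN : LowerSemicontinuous N) (x₀ : X) :
    LowerSemicontinuous (orbitRadius ρ N x₀) :=
  lowerSemicontinuous_iSup fun _ => hN.comp (by fun_prop)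

variable {c : ℝ≥0∞} {K : ℝ≥0}

theorem MidpointStrongConvex.orbitRadius (hN : MidpointStrongConvex c N) (hρ : ∀ g, ‖ρ g‖₊ ≤ K)
    (x₀ : X) : MidpointStrongConvex (c * (K : ℝ≥0∞)⁻¹ ^ 2) (orbitRadius ρ N x₀) := by
  refine MidpointStrongConvex.iSup fun g => ?_
  refine hN.comp_affineMap
    (f := (ρ g.1 : X →ₗ[ℝ] X).toAffineMap - AffineMap.const ℝ X (ρ g.2 x₀)) fun p q => ?_
  simpa using antilipschitzWith_of_norm_inv_le ρ (hρ g.1⁻¹) p q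

theorem exists_forall_apply_eq_of_orbitRadius_ne_top [CompleteSpace X]
    (hN : MidpointStrongConvex c N) (hc : c ≠ 0) (hN_lsc : LowerSemicontinuous N)
    (hρ : ∀ g, ‖ρ g‖₊ ≤ K) {S : Set X} (hS : Convex ℝ S) (hS_closed : IsClosed S)
    (hS_inv : ∀ g, Set.MapsTo (ρ g) S S) {x₀ : X} (hx₀ : x₀ ∈ S)
    (hfin : orbitRadius ρ N x₀ x₀ ≠ ⊤) : ∃ p ∈ S, ∀ g, ρ g p = p := by
  have hconv := hN.orbitRadius ρ hρ x₀
  have hmod : c * (K : ℝ≥0∞)⁻¹ ^ 2 ≠ 0 := by simp [hc]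
  obtain ⟨p, hp, hp_min⟩ := hconv.exists_eq_iInf hmod (lowerSemicontinuous_orbitRadius ρ hN_lsc x₀)
    hS hS_closed ⟨x₀, hx₀, hfin⟩
  refine ⟨p, hp, fun g => hconv.eq_of_le_iInf hmod hS ?_ (hS_inv g hp) hp ?_ hp_min.le⟩
  · exact ne_top_of_le_ne_top hfin (iInf₂_le x₀ hx₀)
  · exact (orbitRadius_apply_le ρ N x₀ p g).trans hp_min.le

end FixedPoint

end MidpointStrongConvex

section CStarAlgebra

theorem inv_mul_mul_mem_unitary {R : Type*} [Monoid R] [StarMul R] {h s : Rˣ}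
    (hs : h * (s * star (s : R)) * star (h : R) = s * star (s : R)) :
    (↑s⁻¹ * h * s : R) ∈ unitary R := by
  have hunit : s * star s = h * s * star (h * s) := by
    ext
    simpa [mul_assoc] using hs.symm
  simpa [mul_assoc] using (Units.inv_mul_mem_unitary s (h * s)).2 hunit

variable {A : Type*} [CStarAlgebra A]

/-- The action of the units of a C⋆-algebra by `g • p = g p g*`; if `h` fixes `s s*`, then
`s⁻¹ h s` is unitary. -/
noncomputable def conjStar : Aˣ →* (A →L[ℝ] A) where
  toFun g := ContinuousLinearMap.mulLeftRight ℝ A g (star (g : A))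
  map_one' := by ext; simp
  map_mul' g h := by ext; simp [mul_assoc]

@[simp]
theorem conjStar_apply (g : Aˣ) (p : A) : conjStar g p = g * p * star (g : A) := rfl

theorem norm_conjStar_le (g : Aˣ) : ‖conjStar g‖ ≤ ‖(g : A)‖ ^ 2 := by
  calc ‖conjStar g‖ ≤ ‖(g : A)‖ * ‖star (g : A)‖ :=
        ContinuousLinearMap.opNorm_mulLeftRight_apply_apply_le ℝ A _ _
    _ = ‖(g : A)‖ ^ 2 := by rw [norm_star, sq]

variable [PartialOrder A]

/-- The elements `p` with `r ≤ g p g*` for all `g ∈ H`: the invariant convex set on which a fixed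
point is sought, where `r` keeps the fixed point away from `0`. -/
def conjLowerBounded (H : Subgroup Aˣ) (r : A) : Set A :=
  ⋂ h : H, conjStar (h : Aˣ) ⁻¹' Set.Ici r

theorem mapsTo_conjStar_conjLowerBounded (H : Subgroup Aˣ) (r : A) (g : H) :
    Set.MapsTo (conjStar (g : Aˣ)) (conjLowerBounded H r) (conjLowerBounded H r) := by
  intro p hp
  refine Set.mem_iInter.2 fun h => ?_
  simpa [mul_assoc] using Set.mem_iInter.1 hp (h * g)

theorem le_of_mem_conjLowerBounded {H : Subgroup Aˣ} {r p : A} (hp : p ∈ conjLowerBounded H r) :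
    r ≤ p := by
  simpa using Set.mem_iInter.1 hp 1

variable [StarOrderedRing A]

theorem algebraMap_inv_le_mul_star (g : Aˣ) {M : ℝ} (hM : 0 < M)
    (hg : ‖(↑g⁻¹ : A)‖ ^ 2 ≤ M) : algebraMap ℝ A M⁻¹ ≤ g * star (g : A) := by
  have hinv : (↑g⁻¹ : A) * star (↑g⁻¹ : A) ≤ algebraMap ℝ A M := by
    refine (IsSelfAdjoint.le_algebraMap_norm_self (.mul_star_self _)).trans (algebraMap_mono A ?_)
    rwa [CStarRing.norm_self_mul_star, ← sq]
  have hone : 1 ≤ M • (g * star (g : A)) := by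
    calc (1 : A) = g * (↑g⁻¹ * star (↑g⁻¹ : A)) * star (g : A) := by
          rw [← mul_assoc, Units.mul_inv, one_mul, ← star_mul, Units.mul_inv, star_one]
      _ ≤ g * algebraMap ℝ A M * star (g : A) := star_right_conjugate_le_conjugate hinv _
      _ = M • (g * star (g : A)) := by simp [Algebra.algebraMap_eq_smul_one]
  rwa [Algebra.algebraMap_eq_smul_one, inv_smul_le_iff_of_pos hM]

theorem exists_unit_mul_star_eq {p : A} (hp : IsStrictlyPositive p) :
    ∃ s : Aˣ, (s : A) * star (s : A) = p := by
  obtain ⟨s, hs⟩ := hp.isUnit_cfcSqrt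
  refine ⟨s, ?_⟩
  rw [hs, (IsSelfAdjoint.of_nonneg (CFC.sqrt_nonneg p)).star_eq, CFC.sqrt_mul_sqrt_self p hp.nonneg]

theorem convex_conjLowerBounded (H : Subgroup Aˣ) (r : A) : Convex ℝ (conjLowerBounded H r) :=
  convex_iInter fun h => (convex_Ici r).linear_preimage (conjStar (h : Aˣ) : A →ₗ[ℝ] A)

theorem isClosed_conjLowerBounded (H : Subgroup Aˣ) (r : A) : IsClosed (conjLowerBounded H r) :=
  isClosed_iInter fun h => isClosed_Ici.preimage (conjStar (h : Aˣ)).continuous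

theorem exists_isStrictlyPositive_forall_conjStar_eq (H : Subgroup Aˣ) {M : ℝ} (hM : 0 < M)
    (hH : ∀ h ∈ H, ‖(h : A)‖ ^ 2 ≤ M) {N : A → ℝ≥0∞} {c : ℝ≥0∞} (hN : MidpointStrongConvex c N)
    (hc : c ≠ 0) (hN_lsc : LowerSemicontinuous N)
    (hfin : orbitRadius (conjStar.comp H.subtype) N 1 1 ≠ ⊤) :
    ∃ p : A, IsStrictlyPositive p ∧ ∀ h ∈ H, conjStar h p = p := by
  set r := algebraMap ℝ A M⁻¹
  have hr_pos : IsStrictlyPositive r :=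
    ⟨algebraMap_nonneg A (by positivity), (IsUnit.mk0 M⁻¹ (by positivity)).map (algebraMap ℝ A)⟩
  have hone : 1 ∈ conjLowerBounded H r := Set.mem_iInter.2 fun h => by
    simpa using algebraMap_inv_le_mul_star (h : Aˣ) hM (hH _ (H.inv_mem h.2))
  obtain ⟨p, hp, hp_fixed⟩ := exists_forall_apply_eq_of_orbitRadius_ne_top
    (conjStar.comp H.subtype) hN hc hN_lsc (K := ⟨M, hM.le⟩)
    (fun h => (norm_conjStar_le (h : Aˣ)).trans (hH h h.2)) (convex_conjLowerBounded H r)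
    (isClosed_conjLowerBounded H r) (mapsTo_conjStar_conjLowerBounded H r) hone hfin
  exact ⟨p, hr_pos.of_le (le_of_mem_conjLowerBounded hp), fun h hh => hp_fixed ⟨h, hh⟩⟩

end CStarAlgebra

section HilbertSchmidt

variable {𝕜 E F I : Type*} [RCLike 𝕜] [NormedAddCommGroup E] [InnerProductSpace 𝕜 E]
  [NormedAddCommGroup F] [InnerProductSpace 𝕜 F] (e : HilbertBasis I 𝕜 E)

/-- The square of the Hilbert–Schmidt norm, with value `⊤` when the operator is not
Hilbert–Schmidt. -/
noncomputable def hilbertSchmidtSq (x : E →L[𝕜] F) : ℝ≥0∞ :=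
  ∑' i, ‖x (e i)‖ₑ ^ 2

theorem hilbertSchmidtSq_smul (a : 𝕜) (x : E →L[𝕜] F) :
    hilbertSchmidtSq e (a • x) = ‖a‖ₑ ^ 2 * hilbertSchmidtSq e x := by
  simp [hilbertSchmidtSq, enorm_smul, mul_pow, ENNReal.tsum_mul_left]

theorem hilbertSchmidtSq_add_add_hilbertSchmidtSq_sub (x y : E →L[𝕜] F) :
    hilbertSchmidtSq e (x + y) + hilbertSchmidtSq e (x - y) =
      2 * (hilbertSchmidtSq e x + hilbertSchmidtSq e y) := by
  simp only [hilbertSchmidtSq, ← ENNReal.tsum_add, ← ENNReal.tsum_mul_left]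
  refine tsum_congr fun i => ?_
  have := parallelogram_law_with_nnnorm 𝕜 (x (e i)) (y (e i))
  simp only [enorm_eq_nnnorm, add_apply, sub_apply]
  exact_mod_cast this

theorem hilbertSchmidtSq_sub_le (x y : E →L[𝕜] F) :
    hilbertSchmidtSq e (x - y) ≤ 2 * (hilbertSchmidtSq e x + hilbertSchmidtSq e y) := by
  rw [← hilbertSchmidtSq_add_add_hilbertSchmidtSq_sub]
  exact le_add_self

theorem lowerSemicontinuous_hilbertSchmidtSq :
    LowerSemicontinuous (hilbertSchmidtSq e : (E →L[𝕜] F) → ℝ≥0∞) :=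
  lowerSemicontinuous_tsum fun i => Continuous.lowerSemicontinuous (by fun_prop)

theorem tsum_enorm_inner_sq (v : E) : ∑' i, ‖⟪e i, v⟫_𝕜‖ₑ ^ 2 = ‖v‖ₑ ^ 2 := by
  have hsum : HasSum (fun i => ‖⟪e i, v⟫_𝕜‖ ^ 2) (‖v‖ ^ 2) := by
    have h := RCLike.hasSum_re 𝕜 (e.hasSum_inner_mul_inner v v)
    simpa only [inner_mul_symm_re_eq_norm, norm_mul, norm_inner_symm v, ← sq,
      inner_self_eq_norm_sq] using h
  simp only [← ofReal_norm, ← ENNReal.ofReal_pow (norm_nonneg _)]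
  rw [← ENNReal.ofReal_tsum_of_nonneg (fun _ => by positivity) hsum.summable, hsum.tsum_eq]

theorem enorm_sq_le_hilbertSchmidtSq [CompleteSpace E] [CompleteSpace F] (x : E →L[𝕜] F) :
    ‖x‖ₑ ^ 2 ≤ hilbertSchmidtSq e x := by
  have hadj (w : F) : ‖x.adjoint w‖ₑ ^ 2 ≤ hilbertSchmidtSq e x * ‖w‖ₑ ^ 2 := by
    rw [← tsum_enorm_inner_sq e, hilbertSchmidtSq, ← ENNReal.tsum_mul_right]
    refine ENNReal.tsum_le_tsum fun i => ?_
    rw [x.adjoint_inner_right, ← mul_pow]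
    gcongr
    simp only [enorm_eq_nnnorm]
    exact_mod_cast nnnorm_inner_le_nnnorm (𝕜 := 𝕜) (x (e i)) w
  have hsqrt : (hilbertSchmidtSq e x ^ (2⁻¹ : ℝ)) ^ 2 = hilbertSchmidtSq e x := by
    rw [← ENNReal.rpow_natCast, ← ENNReal.rpow_mul]
    simp
  have hnorm : ‖x.adjoint‖ₑ ≤ hilbertSchmidtSq e x ^ (2⁻¹ : ℝ) := by
    refine ContinuousLinearMap.opENorm_le_bound _ fun w => ?_
    rw [← ENNReal.pow_le_pow_left_iff two_ne_zero, mul_pow, hsqrt]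
    exact hadj w
  calc ‖x‖ₑ ^ 2 = ‖x.adjoint‖ₑ ^ 2 := by rw [LinearIsometryEquiv.enorm_map]
    _ ≤ (hilbertSchmidtSq e x ^ (2⁻¹ : ℝ)) ^ 2 := by gcongr
    _ = hilbertSchmidtSq e x := hsqrt

theorem midpointStrongConvex_hilbertSchmidtSq {E F : Type*} [NormedAddCommGroup E]
    [InnerProductSpace ℂ E] [CompleteSpace E] [NormedAddCommGroup F] [InnerProductSpace ℂ F]
    [CompleteSpace F] (e : HilbertBasis I ℂ E) :
    MidpointStrongConvex 4⁻¹ (hilbertSchmidtSq e : (E →L[ℂ] F) → ℝ≥0∞) := by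
  intro x y
  set m := midpoint ℝ x y
  have hsum : x + y = (2 : ℂ) • m := by
    rw [two_smul, midpoint_add_self]
  have hm : hilbertSchmidtSq e (x + y) = 4 * hilbertSchmidtSq e m := by
    rw [hsum, hilbertSchmidtSq_smul]
    norm_num [← ofReal_norm]
  have hnorm : edist x y ^ 2 ≤ hilbertSchmidtSq e (x - y) := by
    rw [edist_eq_enorm_sub]
    exact enorm_sq_le_hilbertSchmidtSq e (x - y)
  refine (ENNReal.mul_le_mul_iff_right two_ne_zero ENNReal.ofNat_ne_top).1 ?_
  calc 2 * (2 * (hilbertSchmidtSq e m + 4⁻¹ * edist x y ^ 2))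
      = 4 * hilbertSchmidtSq e m + 4 * 4⁻¹ * edist x y ^ 2 := by ring
    _ ≤ hilbertSchmidtSq e (x + y) + hilbertSchmidtSq e (x - y) := by
        rw [hm, ENNReal.mul_inv_cancel (by norm_num) (by norm_num), one_mul]
        gcongr
    _ = 2 * (hilbertSchmidtSq e x + hilbertSchmidtSq e y) :=
        hilbertSchmidtSq_add_add_hilbertSchmidtSq_sub e x y

theorem hilbertSchmidtSq_le_of_tsum_le {x : E →L[𝕜] F} {C : ℝ}
    (hx : Summable fun i => ‖x (e i)‖ ^ 2) (hC : ∑' i, ‖x (e i)‖ ^ 2 ≤ C ^ 2) :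
    hilbertSchmidtSq e x ≤ ‖C‖ₑ ^ 2 := by
  simp only [hilbertSchmidtSq, ← ofReal_norm, ← ENNReal.ofReal_pow (norm_nonneg _)]
  rw [← ENNReal.ofReal_tsum_of_nonneg (fun _ => by positivity) hx, Real.norm_eq_abs, sq_abs]
  exact ENNReal.ofReal_le_ofReal hC

end HilbertSchmidt

section Unitarizable

variable {ℋ I : Type*} [NormedAddCommGroup ℋ] [InnerProductSpace ℂ ℋ] [CompleteSpace ℋ]
  (e : HilbertBasis I ℂ ℋ)

theorem norm_sq_le_of_hilbertSchmidtSq_mul_star_sub_one_le {x : ℋ →L[ℂ] ℋ} {C : ℝ}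
    (hx : hilbertSchmidtSq e (x * star x - 1) ≤ ‖C‖ₑ ^ 2) : ‖x‖ ^ 2 ≤ 1 + |C| := by
  have hsub : ‖x * star x - 1‖ ≤ |C| := by
    have hsq := (enorm_sq_le_hilbertSchmidtSq e _).trans hx
    rwa [ENNReal.pow_le_pow_left_iff two_ne_zero, enorm_le_iff_norm_le] at hsq
  calc ‖x‖ ^ 2 = ‖1 + (x * star x - 1)‖ := by
        rw [add_sub_cancel, CStarRing.norm_self_mul_star, sq]
    _ ≤ ‖(1 : ℋ →L[ℂ] ℋ)‖ + ‖x * star x - 1‖ := norm_add_le _ _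
    _ ≤ 1 + |C| := add_le_add ContinuousLinearMap.norm_id_le hsub

theorem orbitRadius_conjStar_hilbertSchmidtSq_ne_top (H : Subgroup (ℋ →L[ℂ] ℋ)ˣ) {B : ℝ≥0∞}
    (hB : B ≠ ⊤) (hH : ∀ h ∈ H,
      hilbertSchmidtSq e ((h : ℋ →L[ℂ] ℋ) * star (h : ℋ →L[ℂ] ℋ) - 1) ≤ B) :
    orbitRadius (conjStar.comp H.subtype) (hilbertSchmidtSq e) 1 1 ≠ ⊤ := by
  have hle : orbitRadius (conjStar.comp H.subtype) (hilbertSchmidtSq e) 1 1 ≤ 2 * (B + B) := by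
    refine iSup_le fun ⟨g, h⟩ => ?_
    simp only [MonoidHom.comp_apply, Subgroup.subtype_apply, conjStar_apply, mul_one]
    rw [← sub_sub_sub_cancel_right _ _ (1 : ℋ →L[ℂ] ℋ)]
    exact (hilbertSchmidtSq_sub_le e _ _).trans (by gcongr; exacts [hH g g.2, hH h h.2])
  exact ne_top_of_le_ne_top (by finiteness) hle

end Unitarizable

theorem stmt16_general {ℋ : Type*} [NormedAddCommGroup ℋ] [InnerProductSpace ℂ ℋ]
    [CompleteSpace ℋ] {I : Type*} (e : HilbertBasis I ℂ ℋ) (H : Subgroup (ℋ →L[ℂ] ℋ)ˣ) (C : ℝ)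
    (hC : ∀ h ∈ H,
      (Summable fun i : I =>
        ‖((h : ℋ →L[ℂ] ℋ) * star (h : ℋ →L[ℂ] ℋ) - 1) (e i)‖ ^ 2) ∧
      ∑' i : I, ‖((h : ℋ →L[ℂ] ℋ) * star (h : ℋ →L[ℂ] ℋ) - 1) (e i)‖ ^ 2 ≤ C ^ 2) :
    ∃ s : (ℋ →L[ℂ] ℋ)ˣ, ∀ h ∈ H,
      (↑s⁻¹ : ℋ →L[ℂ] ℋ) * (h : ℋ →L[ℂ] ℋ) * (s : ℋ →L[ℂ] ℋ) ∈ unitary (ℋ →L[ℂ] ℋ) := by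
  have hHS : ∀ h ∈ H, hilbertSchmidtSq e ((h : ℋ →L[ℂ] ℋ) * star (h : ℋ →L[ℂ] ℋ) - 1) ≤
      ‖C‖ₑ ^ 2 :=
    fun h hh => hilbertSchmidtSq_le_of_tsum_le e (hC h hh).1 (hC h hh).2
  obtain ⟨p, hp, hp_fixed⟩ := exists_isStrictlyPositive_forall_conjStar_eq H (M := 1 + |C|)
    (by positivity) (fun h hh => norm_sq_le_of_hilbertSchmidtSq_mul_star_sub_one_le e (hHS h hh))
    (midpointStrongConvex_hilbertSchmidtSq e) (by simp) (lowerSemicontinuous_hilbertSchmidtSq e)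
    (orbitRadius_conjStar_hilbertSchmidtSq_ne_top e H (by finiteness) hHS)
  obtain ⟨s, rfl⟩ := exists_unit_mul_star_eq hp
  exact ⟨s, fun h hh => inv_mul_mul_mem_unitary (hp_fixed h hh)⟩

/-- A group of Hilbert–Schmidt perturbations of scalars with `‖h h* - 1‖₂`
uniformly bounded is unitarizable. -/
theorem stmt16 {ℋ : Type*} [NormedAddCommGroup ℋ] [InnerProductSpace ℂ ℋ]
    [CompleteSpace ℋ] [TopologicalSpace.SeparableSpace ℋ]
    {I : Type*} (e : HilbertBasis I ℂ ℋ) (H : Subgroup (ℋ →L[ℂ] ℋ)ˣ)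
    (hform : ∀ h ∈ H, ∃ (lam : ℂ) (k : ℋ →L[ℂ] ℋ),
      (h : ℋ →L[ℂ] ℋ) = lam • (1 : ℋ →L[ℂ] ℋ) + k ∧
        Summable fun i : I => ‖k (e i)‖ ^ 2)
    (C : ℝ)
    (hC : ∀ h ∈ H,
      (Summable fun i : I =>
        ‖((h : ℋ →L[ℂ] ℋ) * star (h : ℋ →L[ℂ] ℋ) - 1) (e i)‖ ^ 2) ∧
      ∑' i : I, ‖((h : ℋ →L[ℂ] ℋ) * star (h : ℋ →L[ℂ] ℋ) - 1) (e i)‖ ^ 2 ≤ C ^ 2) :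
    ∃ s : (ℋ →L[ℂ] ℋ)ˣ, ∀ h ∈ H,
      (↑s⁻¹ : ℋ →L[ℂ] ℋ) * (h : ℋ →L[ℂ] ℋ) * (s : ℋ →L[ℂ] ℋ) ∈ unitary (ℋ →L[ℂ] ℋ) := by
  exact stmt16_general e H C hC
end
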